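/- There is an absolute constant c > 0 such that the following holds. Let n ≥ 2, k, d be positive integers, and let H_1, …, H_k be 3-uniform hypergraph matchings on [n] such that for every pair {u,v} ⊆ [n], Σ_{i=1}^k |{C ∈ H_i : {u,v} ⊆ C}| ≤ d. For b ∈ {-1,1}^k define f_b(x) := Σ_{i=1}^k b_i Σ_{C∈H_i} ∏_{v∈C} x_v and val(f_b) := max_{x∈{-1,1}^n} f_b(x). Then E_{b uniform in {-1,1}^k}[val(f_b)] ≤ c · n · √k · d · (nk)^{1/8} · (log n)^{1/4}. -/

import Mathlib

open Finset
open scoped Classical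

noncomputable section

/-- The map sending a Boolean to the corresponding element of `{-1, 1} ⊆ ℝ`. -/
def pmo (b : Bool) : ℝ := if b then 1 else -1

/-- `H` is a `q`-uniform hypergraph matching on `[n]`. -/
def IsMatching {n : ℕ} (q : ℕ) (H : Finset (Finset (Fin n))) : Prop :=
  (∀ C ∈ H, C.card = q) ∧ Set.Pairwise (H : Set (Finset (Fin n))) Disjoint

lemma pmo_sq (b : Bool) : pmo b ^ 2 = 1 := by cases b <;> simp [pmo]

lemma abs_pmo (b : Bool) : |pmo b| = 1 := by cases b <;> simp [pmo]

/-- Every mixed moment of independent uniform signs is nonnegative. -/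
lemma sum_prod_pmo_nonneg {p k : ℕ} (w : Fin p → Fin k) :
    0 ≤ ∑ ε : Fin k → Bool, ∏ t, pmo (ε (w t)) := by
  have hprod : ∀ ε : Fin k → Bool, ∏ t, pmo (ε (w t))
      = ∏ i, pmo (ε i) ^ (univ.filter fun t => w t = i).card := by
    intro ε
    rw [← Finset.prod_fiberwise univ w]
    refine prod_congr rfl fun i _ => ?_
    rw [← Finset.prod_const]
    exact prod_congr rfl fun t ht => by rw [(mem_filter.1 ht).2]
  simp_rw [hprod]
  rw [← Fintype.piFinset_univ,
    ← Finset.prod_univ_sum (fun _ : Fin k => (univ : Finset Bool))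
      (fun i b => pmo b ^ (univ.filter fun t => w t = i).card)]
  refine prod_nonneg fun i _ => ?_
  rcases neg_one_pow_eq_or ℝ (univ.filter fun t => w t = i).card with h | h <;>
    simp [pmo, h]

/-- The exponential moment of a sum of independent signs. -/
lemma sum_exp_pmo_le (k : ℕ) (r : ℝ) :
    ∑ ε : Fin k → Bool, Real.exp (r * ∑ i, pmo (ε i)) ≤ 2 ^ k * Real.exp (k * (r ^ 2 / 2)) := by
  have hexp : ∀ ε : Fin k → Bool, Real.exp (r * ∑ i, pmo (ε i))
      = ∏ i, Real.exp (r * pmo (ε i)) := by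
    intro ε
    rw [mul_sum, Real.exp_sum]
  simp_rw [hexp]
  rw [← Fintype.piFinset_univ,
    ← Finset.prod_univ_sum (fun _ : Fin k => (univ : Finset Bool))
      (fun _ b => Real.exp (r * pmo b))]
  have hcosh : ∑ b : Bool, Real.exp (r * pmo b) = 2 * Real.cosh r := by
    rw [Real.cosh_eq]; simp [pmo]; ring
  rw [hcosh, prod_const, card_univ, Fintype.card_fin, Real.exp_nat_mul, ← mul_pow]
  have := Real.cosh_le_exp_half_sq r
  have := (Real.cosh_pos r).le
  gcongr

/-- Even moments of a sum of independent signs. -/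
lemma sum_sum_pmo_pow_le (k q : ℕ) (hk : 0 < k) (hq : 0 < q) :
    ∑ ε : Fin k → Bool, (∑ i, pmo (ε i)) ^ (2 * q)
      ≤ 2 ^ k * (2 * (2 * q * k * Real.exp 1) ^ q) := by
  have hk' : (0 : ℝ) < k := by exact_mod_cast hk
  have hq' : (0 : ℝ) < q := by exact_mod_cast hq
  set r : ℝ := Real.sqrt (2 * q / k) with hr
  have hr0 : 0 < r := Real.sqrt_pos.2 (by positivity)
  have hr2 : r ^ 2 = 2 * q / k := Real.sq_sqrt (by positivity)
  have hpt : ∀ s : ℝ, r ^ (2 * q) * s ^ (2 * q)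
      ≤ (2 * q : ℝ) ^ (2 * q) * (Real.exp (r * s) + Real.exp (-r * s)) := by
    intro s
    have h1 := Real.pow_div_factorial_le_exp |r * s| (abs_nonneg _) (2 * q)
    rw [div_le_iff₀ (by positivity), (even_two_mul q).pow_abs, mul_pow] at h1
    have h2 : Real.exp |r * s| ≤ Real.exp (r * s) + Real.exp (-r * s) := by
      rcases abs_choice (r * s) with h | h <;> rw [h]
      · linarith [Real.exp_pos (-r * s)]
      · rw [← neg_mul]; linarith [Real.exp_pos (r * s)]
    have h3 : ((2 * q).factorial : ℝ) ≤ (2 * q : ℝ) ^ (2 * q) := by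
      exact_mod_cast Nat.factorial_le_pow (2 * q)
    calc _ ≤ _ := h1
      _ ≤ (Real.exp (r * s) + Real.exp (-r * s)) * (2 * q : ℝ) ^ (2 * q) := by gcongr
      _ = _ := by ring
  have hsum : r ^ (2 * q) * ∑ ε : Fin k → Bool, (∑ i, pmo (ε i)) ^ (2 * q)
      ≤ (2 * q : ℝ) ^ (2 * q) * (2 * (2 ^ k * Real.exp (k * (r ^ 2 / 2)))) := by
    rw [mul_sum]
    refine (sum_le_sum fun ε _ => hpt _).trans ?_
    rw [← mul_sum, sum_add_distrib]
    have h1 := sum_exp_pmo_le k r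
    have h2 := sum_exp_pmo_le k (-r)
    rw [neg_sq] at h2
    gcongr
    linarith
  have hexp : Real.exp (k * (r ^ 2 / 2)) = Real.exp 1 ^ q := by
    rw [hr2, ← Real.exp_nat_mul]; congr 1; field_simp
  rw [hexp, pow_mul, pow_mul, hr2] at hsum
  have hpos : (0 : ℝ) < (2 * q / k) ^ q := by positivity
  refine le_of_mul_le_mul_left (hsum.trans_eq ?_) hpos
  have : ((2 * q : ℝ) ^ 2) ^ q = (2 * q / k) ^ q * (2 * q * k) ^ q := by
    rw [← mul_pow]; congr 1; field_simp
  rw [this, mul_pow (2 * q * k : ℝ)]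
  ring

/-- Expansion of a power of a signed sum of matrices over words in the summands. -/
lemma exists_word_expansion {V : Type*} [Fintype V] {k : ℕ}
    (A : Fin k → Matrix V V ℝ) (g : ℝ) (hA : ∀ i T, ∑ T', |A i T T'| ≤ g) (p : ℕ) :
    ∃ P : (Fin p → Fin k) → Matrix V V ℝ,
      (∀ s : Fin k → ℝ, (∑ i, s i • A i) ^ p = ∑ w, (∏ t, s (w t)) • P w) ∧
      ∀ w T, ∑ T', |P w T T'| ≤ g ^ p := by
  induction p with
  | zero =>
    refine ⟨fun _ => 1, fun s => by simp, fun w T => ?_⟩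
    simp [Matrix.one_apply, apply_ite abs]
  | succ p ih =>
    obtain ⟨P, hP, hP'⟩ := ih
    refine ⟨fun w => A (w 0) * P (Fin.tail w), fun s => ?_, fun w T => ?_⟩
    · rw [pow_succ', hP, ← (Fin.consEquiv fun _ => Fin k).sum_comp, Fintype.sum_prod_type,
        sum_mul_sum]
      refine sum_congr rfl fun i _ => sum_congr rfl fun w _ => ?_
      simp [Fin.consEquiv, Fin.prod_univ_succ, smul_smul, mul_comm]
    · have hg : 0 ≤ g := (sum_nonneg fun _ _ => abs_nonneg _).trans (hA (w 0) T)
      calc ∑ T', |(A (w 0) * P (Fin.tail w)) T T'|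
          ≤ ∑ T', ∑ U, |A (w 0) T U| * |P (Fin.tail w) U T'| := by
            refine sum_le_sum fun T' _ => ?_
            rw [Matrix.mul_apply]
            refine (abs_sum_le_sum_abs _ _).trans_eq ?_
            simp_rw [abs_mul]
        _ = ∑ U, |A (w 0) T U| * ∑ T', |P (Fin.tail w) U T'| := by
            rw [sum_comm]; simp_rw [mul_sum]
        _ ≤ ∑ U, |A (w 0) T U| * g ^ p := by
            gcongr; exact hP' _ _
        _ ≤ g * g ^ p := by
            rw [← sum_mul]; gcongr; exact hA _ _
        _ = g ^ (p + 1) := by ring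

/-- Trace moments of a signed sum of matrices with bounded absolute row sums. -/
lemma sum_trace_pow_le {V : Type*} [Fintype V] {k : ℕ}
    (A : Fin k → Matrix V V ℝ) (g : ℝ) (hA : ∀ i T, ∑ T', |A i T T'| ≤ g) (p : ℕ) :
    ∑ ε : Fin k → Bool, ((∑ i, pmo (ε i) • A i) ^ p).trace
      ≤ Fintype.card V * g ^ p * ∑ ε : Fin k → Bool, (∑ i, pmo (ε i)) ^ p := by
  obtain ⟨P, hP, hP'⟩ := exists_word_expansion A g hA p
  have hdiag : ∀ w, (P w).trace ≤ Fintype.card V * g ^ p := by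
    intro w
    have : ∀ T, P w T T ≤ g ^ p := fun T =>
      (le_abs_self _).trans ((single_le_sum (f := fun T' => |P w T T'|)
        (fun _ _ => abs_nonneg _) (mem_univ T)).trans (hP' w T))
    calc (P w).trace ≤ ∑ _T : V, g ^ p := sum_le_sum fun T _ => this T
      _ = _ := by simp
  have hpow : ∀ ε : Fin k → Bool, (∑ i, pmo (ε i)) ^ p
      = ∑ w : Fin p → Fin k, ∏ t, pmo (ε (w t)) := by
    intro ε
    rw [← Fintype.piFinset_univ, ← Finset.prod_univ_sum (fun _ : Fin p => univ)
      (fun _ i => pmo (ε i))]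
    simp
  simp_rw [hP, hpow, Matrix.trace_sum, Matrix.trace_smul, smul_eq_mul]
  rw [sum_comm, sum_comm (f := fun (ε : Fin k → Bool) (w : Fin p → Fin k) =>
    ∏ t, pmo (ε (w t))), mul_sum]
  refine sum_le_sum fun w _ => ?_
  rw [← sum_mul, mul_comm]
  exact mul_le_mul_of_nonneg_right (hdiag w) (sum_prod_pmo_nonneg w)

open Matrix in
/-- A power-mean inequality for quadratic forms of symmetric matrices. -/
lemma dotProduct_mulVec_pow_le {V : Type*} [Fintype V]
    (A : Matrix V V ℝ) (hA : A.IsSymm) (z : V → ℝ) (m : ℕ) :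
    (z ⬝ᵥ A *ᵥ z) ^ 2 ^ (m + 1) ≤ (z ⬝ᵥ z) ^ 2 ^ (m + 1) * (A ^ 2 ^ (m + 1)).trace := by
  have hsymm : ∀ p, (A ^ p).IsSymm := fun p => by
    rw [Matrix.IsSymm, Matrix.transpose_pow, hA]
  have hsq : ∀ p, A ^ p *ᵥ z ⬝ᵥ A ^ p *ᵥ z = z ⬝ᵥ A ^ (2 * p) *ᵥ z := by
    intro p
    rw [two_mul, pow_add, ← Matrix.mulVec_mulVec, Matrix.dotProduct_mulVec z,
      ← Matrix.mulVec_transpose, hsymm p]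
  have hcs : ∀ u v : V → ℝ, (u ⬝ᵥ v) ^ 2 ≤ (u ⬝ᵥ u) * (v ⬝ᵥ v) := by
    intro u v
    have := Finset.sum_mul_sq_le_sq_mul_sq univ u v
    simpa [dotProduct, sq] using this
  have hzz : 0 ≤ z ⬝ᵥ z := by
    simpa [dotProduct, sq] using sum_nonneg fun i (_ : i ∈ univ) => sq_nonneg (z i)
  have hstep : ∀ m, (z ⬝ᵥ A *ᵥ z) ^ 2 ^ (m + 1)
      ≤ (z ⬝ᵥ z) ^ (2 ^ (m + 1) - 1) * (z ⬝ᵥ A ^ 2 ^ (m + 1) *ᵥ z) := by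
    intro m
    induction m with
    | zero =>
      have := hcs z (A *ᵥ z)
      have h1 := hsq 1
      simp only [pow_one, mul_one] at h1
      simpa [h1] using this
    | succ m ih =>
      have h0 : 0 ≤ (z ⬝ᵥ A *ᵥ z) ^ 2 ^ (m + 1) := by
        rw [pow_succ 2 m, mul_comm, pow_mul]; positivity
      have h1 := pow_le_pow_left₀ h0 ih 2
      have h2 := hcs z (A ^ 2 ^ (m + 1) *ᵥ z)
      rw [hsq, ← pow_succ'] at h2
      have hexp : 2 ^ (m + 1 + 1) - 1 = (2 ^ (m + 1) - 1) * 2 + 1 := by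
        have := Nat.one_le_two_pow (n := m + 1)
        rw [pow_succ 2 (m + 1)]; omega
      calc (z ⬝ᵥ A *ᵥ z) ^ 2 ^ (m + 1 + 1) = ((z ⬝ᵥ A *ᵥ z) ^ 2 ^ (m + 1)) ^ 2 := by
            rw [← pow_mul, ← pow_succ]
        _ ≤ _ := h1
        _ = (z ⬝ᵥ z) ^ ((2 ^ (m + 1) - 1) * 2) * (z ⬝ᵥ A ^ 2 ^ (m + 1) *ᵥ z) ^ 2 := by
            rw [mul_pow, ← pow_mul]
        _ ≤ (z ⬝ᵥ z) ^ ((2 ^ (m + 1) - 1) * 2)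
              * ((z ⬝ᵥ z) * (z ⬝ᵥ A ^ 2 ^ (m + 1 + 1) *ᵥ z)) := by gcongr
        _ = _ := by rw [hexp, pow_succ (z ⬝ᵥ z), mul_assoc]
  have htr : z ⬝ᵥ A ^ 2 ^ (m + 1) *ᵥ z ≤ (z ⬝ᵥ z) * (A ^ 2 ^ (m + 1)).trace := by
    rw [pow_succ' 2 m, ← hsq, two_mul (2 ^ m), pow_add]
    have hrow : ∀ T, (A ^ 2 ^ m *ᵥ z) T * (A ^ 2 ^ m *ᵥ z) T
        ≤ (z ⬝ᵥ z) * (A ^ 2 ^ m * A ^ 2 ^ m) T T := by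
      intro T
      have h1 := hcs ((A ^ 2 ^ m) T) z
      have h2 : (A ^ 2 ^ m * A ^ 2 ^ m) T T = (A ^ 2 ^ m) T ⬝ᵥ (A ^ 2 ^ m) T := by
        rw [Matrix.mul_apply]
        exact sum_congr rfl fun U _ => by rw [(hsymm (2 ^ m)).apply]
      rw [h2, ← sq, mul_comm]
      exact h1
    calc _ = ∑ T, (A ^ 2 ^ m *ᵥ z) T * (A ^ 2 ^ m *ᵥ z) T := rfl
      _ ≤ ∑ T, (z ⬝ᵥ z) * (A ^ 2 ^ m * A ^ 2 ^ m) T T := sum_le_sum fun T _ => hrow T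
      _ = _ := by rw [← mul_sum]; rfl
  calc _ ≤ _ := hstep m
    _ ≤ (z ⬝ᵥ z) ^ (2 ^ (m + 1) - 1) * ((z ⬝ᵥ z) * (A ^ 2 ^ (m + 1)).trace) := by gcongr
    _ = _ := by
      rw [← mul_assoc, ← pow_succ, Nat.sub_add_cancel Nat.one_le_two_pow]

open Matrix in
/-- Quadratic forms of a signed sum of symmetric matrices, evaluated at a sign vector chosen
depending on the signs, are small on average. -/
lemma sum_dotProduct_mulVec_le {V : Type*} [Fintype V] {k : ℕ} (hk : 0 < k)
    (A : Fin k → Matrix V V ℝ) (hsymm : ∀ i, (A i).IsSymm) (g : ℝ) (hg : 0 ≤ g)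
    (hA : ∀ i T, ∑ T', |A i T T'| ≤ g) (z : (Fin k → Bool) → V → ℝ)
    (hz : ∀ ε T, z ε T ^ 2 = 1) (m : ℕ)
    (hm : 2 * (Fintype.card V : ℝ) ≤ Real.exp 1 ^ 2 ^ (m + 1)) :
    (∑ ε : Fin k → Bool, z ε ⬝ᵥ (∑ i, pmo (ε i) • A i) *ᵥ z ε) / 2 ^ k
      ≤ Fintype.card V * g * Real.exp 1 * Real.sqrt (2 ^ (m + 1) * k * Real.exp 1) := by
  set N : ℝ := (Fintype.card V : ℝ) with hNdef
  set p := 2 ^ (m + 1) with hp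
  have hp2 : p = 2 * 2 ^ m := pow_succ' 2 m
  have hzz : ∀ ε, z ε ⬝ᵥ z ε = N := by
    intro ε
    simp only [dotProduct, ← sq, hz]
    simp [hNdef]
  have hN : 0 ≤ N := Nat.cast_nonneg _
  have hsum : ∀ ε : Fin k → Bool, (∑ i, pmo (ε i) • A i).IsSymm := by
    intro ε
    rw [Matrix.IsSymm, Matrix.transpose_sum]
    exact sum_congr rfl fun i _ => by rw [Matrix.transpose_smul, hsymm i]
  have hpe : Even p := ⟨2 ^ m, by rw [hp2, two_mul]⟩
  refine le_of_pow_le_pow_left₀ (n := p) (by positivity) (by positivity) ?_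
  have hJ : ((∑ ε : Fin k → Bool, z ε ⬝ᵥ (∑ i, pmo (ε i) • A i) *ᵥ z ε) / 2 ^ k) ^ p
      ≤ (∑ ε : Fin k → Bool, (z ε ⬝ᵥ (∑ i, pmo (ε i) • A i) *ᵥ z ε) ^ p) / 2 ^ k := by
    have := Real.pow_arith_mean_le_arith_mean_pow_of_even univ
      (fun _ : Fin k → Bool => ((2 : ℝ) ^ k)⁻¹)
      (fun ε => z ε ⬝ᵥ (∑ i, pmo (ε i) • A i) *ᵥ z ε) (fun _ _ => by positivity)
      (by simp) hpe
    rw [← mul_sum, ← mul_sum] at this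
    rwa [div_eq_inv_mul, div_eq_inv_mul]
  refine hJ.trans ?_
  rw [div_le_iff₀ (by positivity)]
  calc ∑ ε : Fin k → Bool, (z ε ⬝ᵥ (∑ i, pmo (ε i) • A i) *ᵥ z ε) ^ p
      ≤ ∑ ε : Fin k → Bool, N ^ p * ((∑ i, pmo (ε i) • A i) ^ p).trace := by
        refine sum_le_sum fun ε _ => ?_
        have := dotProduct_mulVec_pow_le _ (hsum ε) (z ε) m
        rwa [hzz] at this
    _ ≤ N ^ p * (N * g ^ p * ∑ ε : Fin k → Bool, (∑ i, pmo (ε i)) ^ p) := by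
        rw [← mul_sum]
        gcongr
        exact sum_trace_pow_le A g hA p
    _ ≤ N ^ p * (N * g ^ p * (2 ^ k * (2 * (2 * (2 ^ m : ℕ) * k * Real.exp 1) ^ 2 ^ m))) := by
        gcongr
        rw [hp2]
        exact sum_sum_pmo_pow_le k (2 ^ m) hk (by positivity)
    _ = N ^ p * g ^ p * (2 * N) * (2 ^ (m + 1) * k * Real.exp 1) ^ 2 ^ m * 2 ^ k := by
        push_cast
        rw [← pow_succ' (2 : ℝ)]
        ring
    _ ≤ N ^ p * g ^ p * Real.exp 1 ^ p * (2 ^ (m + 1) * k * Real.exp 1) ^ 2 ^ m * 2 ^ k := by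
        gcongr
    _ = _ := by
        rw [mul_pow (N * g * Real.exp 1), mul_pow (N * g), mul_pow N, hp2, pow_mul (Real.sqrt _),
          Real.sq_sqrt (by positivity)]

/-- Averaging a function on a finite power over one resampled coordinate. -/
lemma sum_eq_sum_resample {ι Y : Type*} [Fintype ι] [DecidableEq ι] [Fintype Y] [Nonempty Y]
    (r : ι) (G : (ι → Y) → ℝ) (F : (ι → Y) → Y → ℝ)
    (hF : ∀ T y, G (Function.update T r y) = F T y) :
    ∑ T, G T = (∑ T, ∑ y, F T y) / Fintype.card Y := by
  have hinv : Function.Involutive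
      (fun q : (ι → Y) × Y => (Function.update q.1 r q.2, q.1 r)) := by
    rintro ⟨T, y⟩; simp
  have hY : (Fintype.card Y : ℝ) ≠ 0 := by positivity
  rw [eq_div_iff hY]
  calc (∑ T, G T) * Fintype.card Y = ∑ q : (ι → Y) × Y, G q.1 := by
        rw [Fintype.sum_prod_type]; simp [mul_sum, mul_comm]
    _ = ∑ q : (ι → Y) × Y, G (Function.update q.1 r q.2) :=
        (Equiv.sum_comp hinv.toPerm fun q : (ι → Y) × Y => G q.1).symm
    _ = _ := by rw [Fintype.sum_prod_type]; simp_rw [hF]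

/-- The tuples `T` and `T'` agree at all coordinates other than `s` and `s'`. -/
def AgreeOff {ι Y : Type*} (s s' : ι) (T T' : ι → Y) : Prop :=
  ∀ r, r ≠ s → r ≠ s' → T r = T' r

lemma agreeOff_comm {ι Y : Type*} {s s' : ι} {T T' : ι → Y} :
    AgreeOff s s' T T' ↔ AgreeOff s s' T' T :=
  ⟨fun h r h₁ h₂ => (h r h₁ h₂).symm, fun h r h₁ h₂ => (h r h₁ h₂).symm⟩

/-- The indicator of the tuples with prescribed values at two coordinates. -/
def cylinder {ι Y : Type*} (s s' : ι) (v v' : Y) (T : ι → Y) : ℝ :=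
  if T s = v ∧ T s' = v' then 1 else 0

lemma cylinder_nonneg {ι Y : Type*} (s s' : ι) (v v' : Y) (T : ι → Y) :
    0 ≤ cylinder s s' v v' T := by
  unfold cylinder; split_ifs <;> simp

lemma sum_cylinder_mul_eq {ι Y : Type*} [Fintype Y] (s s' : ι) (φ : Y → Y → ℝ) (T : ι → Y) :
    ∑ v, ∑ v', cylinder s s' v v' T * φ v v' = φ (T s) (T s') := by
  simp [cylinder, ite_and]

section Cylinder

variable {ι Y : Type*} [Fintype ι] [DecidableEq ι] [Fintype Y] {s s' : ι}

lemma sum_agreeOff (hs : s ≠ s') (T : ι → Y) (G : (ι → Y) → ℝ) :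
    ∑ T', (if AgreeOff s s' T T' then G T' else 0)
      = ∑ w, ∑ w', G (Function.update (Function.update T s w) s' w') := by
  rw [← sum_filter, ← Fintype.sum_prod_type']
  symm
  refine sum_nbij' (fun q => Function.update (Function.update T s q.1) s' q.2)
    (fun T' => (T' s, T' s')) ?_ ?_ ?_ ?_ ?_
  · intro q _
    simp only [mem_filter, mem_univ, true_and]
    intro r h₁ h₂
    simp [h₁, h₂]
  · simp
  · rintro ⟨w, w'⟩ _
    simp [hs]
  · intro T' hT'
    have hT' := (mem_filter.1 hT').2
    funext r
    by_cases h₂ : r = s'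
    · subst h₂; simp
    by_cases h₁ : r = s
    · subst h₁; simp [h₂]
    simp [h₁, h₂, hT' r h₁ h₂]
  · simp

lemma sum_agreeOff_cylinder (hs : s ≠ s') (T : ι → Y) (w w' : Y) :
    ∑ T', (if AgreeOff s s' T T' then cylinder s s' w w' T' else 0) = 1 := by
  rw [sum_agreeOff hs]
  simp [cylinder, hs, ite_and]

variable [Nonempty Y]

lemma sum_cylinder (hs : s ≠ s') (v v' : Y) :
    ∑ T, cylinder s s' v v' T
      = (Fintype.card (ι → Y) : ℝ) / Fintype.card Y / Fintype.card Y := by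
  rw [sum_eq_sum_resample s _ (fun T y => if y = v ∧ T s' = v' then 1 else 0)
    (fun T y => by simp [cylinder, hs.symm])]
  congr 1
  simp only [ite_and, sum_ite_eq', mem_univ, if_true]
  rw [sum_eq_sum_resample s' _ (fun T y => if y = v' then 1 else 0) (fun T y => by simp)]
  simp

lemma sum_cylinder_mul (v v' : Y) {r : ι} (h₁ : r ≠ s) (h₂ : r ≠ s')
    (φ : Y → ℝ) :
    ∑ T, cylinder s s' v v' T * φ (T r)
      = (∑ T, cylinder s s' v v' T) * ((∑ y, φ y) / Fintype.card Y) := by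
  rw [sum_eq_sum_resample r _ (fun T y => cylinder s s' v v' T * φ y)
    (fun T y => by simp [cylinder, h₁.symm, h₂.symm])]
  simp_rw [← mul_sum]
  rw [← sum_mul, mul_div_assoc]

lemma sum_cylinder_mul_mul (v v' : Y) {r r' : ι} (hr : r ≠ r') (h₁ : r ≠ s)
    (h₂ : r ≠ s') (h₁' : r' ≠ s) (h₂' : r' ≠ s') (φ : Y → Y → ℝ) :
    ∑ T, cylinder s s' v v' T * φ (T r) (T r')
      = (∑ T, cylinder s s' v v' T) *
        ((∑ y, ∑ y', φ y y') / Fintype.card Y / Fintype.card Y) := by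
  rw [sum_eq_sum_resample r _ (fun T y => cylinder s s' v v' T * φ y (T r'))
    (fun T y => by simp [cylinder, h₁.symm, h₂.symm, hr.symm])]
  simp_rw [← mul_sum]
  rw [sum_cylinder_mul v v' h₁' h₂' fun y' => ∑ y, φ y y', sum_comm, mul_div_assoc]

end Cylinder

/-- The total weight of the moves available from a pair of tuples. -/
def moveDegree {ℓ : ℕ} {Y : Type*} (h : Y → Y → ℝ) (T : Fin ℓ ⊕ Fin ℓ → Y) : ℝ :=
  ∑ a, ∑ a', h (T (Sum.inl a)) (T (Sum.inr a'))

/-- The average move degree of a tuple with two prescribed coordinates. -/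
lemma sum_cylinder_mul_moveDegree_le {ℓ : ℕ} {Y : Type*} [Fintype Y] [Nonempty Y]
    (h : Y → Y → ℝ) (h0 : ∀ v v', 0 ≤ h v v') (γ : ℝ) (v v' : Y)
    (hγ : h v v' + ℓ * ((∑ y', h v y') / Fintype.card Y)
      + ℓ * ((∑ y, h y v') / Fintype.card Y)
      + ℓ ^ 2 * ((∑ y, ∑ y', h y y') / Fintype.card Y / Fintype.card Y) ≤ γ)
    (b b' : Fin ℓ) :
    ∑ T, cylinder (Sum.inl b) (Sum.inr b') v v' T * moveDegree h T
      ≤ (∑ T : Fin ℓ ⊕ Fin ℓ → Y, cylinder (Sum.inl b) (Sum.inr b') v v' T) * γ := by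
  set J := cylinder (Y := Y) (Sum.inl b : Fin ℓ ⊕ Fin ℓ) (Sum.inr b') v v' with hJ
  have hJ0 : 0 ≤ ∑ T, J T := sum_nonneg fun T _ => cylinder_nonneg _ _ _ _ T
  have hl : ∀ T, J T * h (T (Sum.inl b)) (T (Sum.inr b')) = J T * h v v' := by
    intro T; simp only [hJ, cylinder]; split_ifs with hT <;> simp [hT]
  set R := (∑ y', h v y') / (Fintype.card Y : ℝ) with hR
  set L := (∑ y, h y v') / (Fintype.card Y : ℝ) with hL
  set M := (∑ y, ∑ y', h y y') / (Fintype.card Y : ℝ) / Fintype.card Y with hM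
  have hR0 : 0 ≤ R := div_nonneg (sum_nonneg fun _ _ => h0 _ _) (by positivity)
  have hL0 : 0 ≤ L := div_nonneg (sum_nonneg fun _ _ => h0 _ _) (by positivity)
  have hM0 : 0 ≤ M := div_nonneg (div_nonneg
    (sum_nonneg fun _ _ => sum_nonneg fun _ _ => h0 _ _) (by positivity)) (by positivity)
  have hterm : ∀ a a', ∑ T, J T * h (T (Sum.inl a)) (T (Sum.inr a'))
      ≤ (∑ T, J T) * ((if a = b then (if a' = b' then h v v' else 0) else 0)
        + (if a = b then R else 0) + (if a' = b' then L else 0) + M) := by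
    intro a a'
    by_cases ha : a = b
    · by_cases ha' : a' = b'
      · subst ha ha'
        simp_rw [hl]
        rw [← sum_mul]
        gcongr
        simp only [if_true]
        linarith
      · subst ha
        have : ∀ T, J T * h (T (Sum.inl a)) (T (Sum.inr a')) = J T * h v (T (Sum.inr a')) := by
          intro T; simp only [hJ, cylinder]; split_ifs with hT <;> simp [hT]
        simp_rw [this]
        rw [hJ, sum_cylinder_mul v v' (by simp) (by simpa using ha') (fun y' => h v y'), ← hJ]
        gcongr
        simp only [if_true, ha', if_false]
        linarith
    · by_cases ha' : a' = b'
      · subst ha'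
        have : ∀ T, J T * h (T (Sum.inl a)) (T (Sum.inr a')) = J T * h (T (Sum.inl a)) v' := by
          intro T; simp only [hJ, cylinder]; split_ifs with hT <;> simp [hT]
        simp_rw [this]
        rw [hJ, sum_cylinder_mul v v' (by simpa using ha) (by simp) (fun y => h y v'), ← hJ]
        gcongr
        simp only [if_true, ha, if_false]
        linarith
      · rw [hJ, sum_cylinder_mul_mul v v' (by simp) (by simpa using ha) (by simp) (by simp)
          (by simpa using ha') h, ← hJ]
        gcongr
        simp only [ha, ha', if_false]
        linarith
  calc ∑ T, J T * moveDegree h T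
      = ∑ a, ∑ a', ∑ T, J T * h (T (Sum.inl a)) (T (Sum.inr a')) := by
        simp_rw [moveDegree, mul_sum]
        rw [sum_comm]
        exact sum_congr rfl fun a _ => sum_comm
    _ ≤ ∑ a, ∑ a', (∑ T, J T) * ((if a = b then (if a' = b' then h v v' else 0) else 0)
        + (if a = b then R else 0) + (if a' = b' then L else 0) + M) :=
        sum_le_sum fun a _ => sum_le_sum fun a' _ => hterm a a'
    _ = (∑ T, J T) * (h v v' + ℓ * R + ℓ * L + ℓ ^ 2 * M) := by
        simp_rw [← mul_sum, sum_add_distrib]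
        simp [sq, mul_assoc]
    _ ≤ _ := by gcongr

open Matrix in
/-- A symmetric four-argument weight is represented by a symmetric matrix indexed by pairs of
`ℓ`-tuples (a pruned and reweighted Kikuchi matrix), with absolute row sums controlled by the
average move degree. -/
lemma exists_kikuchi_matrix (ℓ : ℕ) {Y : Type*} [Fintype Y] [Nonempty Y]
    (c : Y → Y → Y → Y → ℝ) (hc : ∀ v v' w w', c v v' w w' = c w w' v v')
    (h : Y → Y → ℝ) (hh : ∀ v v', h v v' = ∑ w, ∑ w', |c v v' w w'|) (γ : ℝ) (hγ0 : 0 < γ)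
    (hγ : ∀ v v', h v v' + ℓ * ((∑ y', h v y') / Fintype.card Y)
      + ℓ * ((∑ y, h y v') / Fintype.card Y)
      + ℓ ^ 2 * ((∑ y, ∑ y', h y y') / Fintype.card Y / Fintype.card Y) ≤ γ) :
    ∃ A : Matrix (Fin ℓ ⊕ Fin ℓ → Y) (Fin ℓ ⊕ Fin ℓ → Y) ℝ, A.IsSymm ∧
      (∀ T, ∑ T', |A T T'| ≤ 8 * γ * Fintype.card Y ^ 2 / Fintype.card (Fin ℓ ⊕ Fin ℓ → Y)) ∧
      ∀ x : Y → ℝ, (∀ y, x y ^ 2 = 1) →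
        (fun T => ∏ r, x (T r)) ⬝ᵥ A *ᵥ (fun T => ∏ r, x (T r))
          = ℓ ^ 2 * ∑ v, ∑ v', ∑ w, ∑ w', c v v' w w' * (x v * x v' * (x w * x w')) := by
  have h0 : ∀ v v', 0 ≤ h v v' := fun v v' => by
    rw [hh]; exact sum_nonneg fun _ _ => sum_nonneg fun _ _ => abs_nonneg _
  set n : ℝ := (Fintype.card Y : ℝ) with hn
  set N : ℝ := (Fintype.card (Fin ℓ ⊕ Fin ℓ → Y) : ℝ) with hN
  have hn0 : 0 < n := by rw [hn]; positivity
  have hN0 : 0 < N := by rw [hN]; exact_mod_cast Fintype.card_pos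
  set K : (Fin ℓ ⊕ Fin ℓ → Y) → ℝ := fun T => if moveDegree h T ≤ 4 * γ then 1 else 0 with hK
  have hdeg0 : ∀ T : Fin ℓ ⊕ Fin ℓ → Y, 0 ≤ moveDegree h T := fun T =>
    sum_nonneg fun _ _ => sum_nonneg fun _ _ => h0 _ _
  have hK0 : ∀ T, 0 ≤ K T := fun T => by simp only [hK]; split_ifs <;> simp
  have hK1 : ∀ T, K T ≤ 1 := fun T => by simp only [hK]; split_ifs <;> simp
  have hKmarkov : ∀ T, 1 - K T ≤ moveDegree h T / (4 * γ) := by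
    intro T
    rw [le_div_iff₀ (by positivity)]
    simp only [hK]
    split_ifs with hT
    · simpa using hdeg0 T
    · linarith
  have hKdeg : ∀ T, K T * moveDegree h T ≤ 4 * γ := by
    intro T
    simp only [hK]
    split_ifs with hT
    · simpa using hT
    · simp; positivity
  set J : Fin ℓ → Fin ℓ → Y → Y → (Fin ℓ ⊕ Fin ℓ → Y) → ℝ :=
    fun a a' => cylinder (Sum.inl a) (Sum.inr a') with hJ
  have hJ0 : ∀ a a' v v' T, 0 ≤ J a a' v v' T := fun a a' v v' T => cylinder_nonneg _ _ _ _ T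
  have hJsum : ∀ a a' v v', ∑ T, J a a' v v' T = N / n / n := fun a a' v v' =>
    sum_cylinder Sum.inl_ne_inr v v'
  set E : Fin ℓ → Fin ℓ → (Fin ℓ ⊕ Fin ℓ → Y) → (Fin ℓ ⊕ Fin ℓ → Y) → ℝ :=
    fun a a' T T' => if AgreeOff (Sum.inl a) (Sum.inr a') T T' then K T * K T' else 0 with hE
  have hEsymm : ∀ a a' T T', E a a' T T' = E a a' T' T := by
    intro a a' T T'
    simp only [hE, agreeOff_comm (T := T) (T' := T'), mul_comm (K T)]
  have hE0 : ∀ a a' T T', 0 ≤ E a a' T T' := by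
    intro a a' T T'
    simp only [hE]
    split_ifs
    · exact mul_nonneg (hK0 _) (hK0 _)
    · exact le_rfl
  set ρ : Fin ℓ → Fin ℓ → Y → Y → Y → Y → ℝ := fun a a' v v' w w' =>
    ∑ T, ∑ T', E a a' T T' * (J a a' v v' T * J a a' w w' T') with hρ
  have hρsymm : ∀ a a' v v' w w', ρ a a' v v' w w' = ρ a a' w w' v v' := by
    intro a a' v v' w w'
    simp only [hρ]
    rw [sum_comm]
    exact sum_congr rfl fun T _ => sum_congr rfl fun T' _ => by
      rw [hEsymm, mul_comm (J a a' v v' T')]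
  have hmarkov : ∀ a a' v v', ∑ T, J a a' v v' T * (1 - K T) ≤ N / n / n / 4 := by
    intro a a' v v'
    calc ∑ T, J a a' v v' T * (1 - K T)
        ≤ ∑ T, J a a' v v' T * (moveDegree h T / (4 * γ)) :=
          sum_le_sum fun T _ => mul_le_mul_of_nonneg_left (hKmarkov T) (hJ0 _ _ _ _ T)
      _ = (∑ T, J a a' v v' T * moveDegree h T) / (4 * γ) := by
          rw [sum_div]; exact sum_congr rfl fun T _ => by ring
      _ ≤ ((∑ T, J a a' v v' T) * γ) / (4 * γ) := by
          gcongr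
          exact sum_cylinder_mul_moveDegree_le h h0 γ v v' (hγ v v') a a'
      _ = _ := by rw [hJsum]; field_simp
  have hρlower : ∀ a a' v v' w w', N / n / n / 2 ≤ ρ a a' v v' w w' := by
    intro a a' v v' w w'
    have hpt : ∀ T T', (if AgreeOff (Sum.inl a) (Sum.inr a') T T' then J a a' w w' T' else 0)
          * (J a a' v v' T * K T)
        - (if AgreeOff (Sum.inl a) (Sum.inr a') T' T then J a a' v v' T else 0)
          * (J a a' w w' T' * (1 - K T'))
        ≤ E a a' T T' * (J a a' v v' T * J a a' w w' T') := by
      intro T T'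
      simp only [hE, agreeOff_comm (T := T') (T' := T)]
      split_ifs
      · have h1 := mul_nonneg (hJ0 a a' v v' T) (hJ0 a a' w w' T')
        have h2 := mul_nonneg (sub_nonneg.2 (hK1 T)) (sub_nonneg.2 (hK1 T'))
        nlinarith [mul_nonneg h1 h2]
      · simp
    have hsum1 : ∑ T, ∑ T',
        (if AgreeOff (Sum.inl a) (Sum.inr a') T T' then J a a' w w' T' else 0)
          * (J a a' v v' T * K T) = ∑ T, J a a' v v' T * K T := by
      refine sum_congr rfl fun T _ => ?_
      rw [← sum_mul, sum_agreeOff_cylinder Sum.inl_ne_inr, one_mul]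
    have hsum2 : ∑ T, ∑ T',
        (if AgreeOff (Sum.inl a) (Sum.inr a') T' T then J a a' v v' T else 0)
          * (J a a' w w' T' * (1 - K T')) = ∑ T', J a a' w w' T' * (1 - K T') := by
      rw [sum_comm]
      refine sum_congr rfl fun T _ => ?_
      rw [← sum_mul, sum_agreeOff_cylinder Sum.inl_ne_inr, one_mul]
    have hle := sum_le_sum fun T (_ : T ∈ univ) => sum_le_sum fun T' (_ : T' ∈ univ) => hpt T T'
    simp_rw [sum_sub_distrib] at hle
    rw [hsum1, hsum2] at hle
    have h1 := hmarkov a a' v v'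
    have h2 := hmarkov a a' w w'
    have h3 := hJsum a a' v v'
    simp_rw [mul_sub, mul_one, sum_sub_distrib] at h1
    simp only [hρ]
    linarith
  have hρpos : ∀ a a' v v' w w', 0 < ρ a a' v v' w w' := fun a a' v v' w w' =>
    lt_of_lt_of_le (by positivity) (hρlower a a' v v' w w')
  set θ : Fin ℓ → Fin ℓ → Y → Y → Y → Y → ℝ := fun a a' v v' w w' =>
    c v v' w w' / ρ a a' v v' w w' with hθ
  refine ⟨Matrix.of fun T T' => ∑ a, ∑ a', E a a' T T' *
    θ a a' (T (Sum.inl a)) (T (Sum.inr a')) (T' (Sum.inl a)) (T' (Sum.inr a')), ?_, ?_, ?_⟩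
  · ext T T'
    rw [Matrix.transpose_apply, Matrix.of_apply, Matrix.of_apply]
    refine sum_congr rfl fun a _ => sum_congr rfl fun a' _ => ?_
    simp only [hθ]
    rw [hEsymm, hc, hρsymm]
  · intro T
    simp only [Matrix.of_apply]
    have hθabs : ∀ a a' v v' w w', |θ a a' v v' w w'| ≤ |c v v' w w'| * (2 * n ^ 2 / N) := by
      intro a a' v v' w w'
      simp only [hθ]
      rw [abs_div, abs_of_pos (hρpos _ _ _ _ _ _), div_eq_mul_inv]
      gcongr
      rw [inv_le_comm₀ (hρpos _ _ _ _ _ _) (by positivity)]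
      refine le_trans (le_of_eq ?_) (hρlower a a' v v' w w')
      field_simp
    calc ∑ T', |∑ a, ∑ a', E a a' T T' *
          θ a a' (T (Sum.inl a)) (T (Sum.inr a')) (T' (Sum.inl a)) (T' (Sum.inr a'))|
        ≤ ∑ T', ∑ a, ∑ a', (if AgreeOff (Sum.inl a) (Sum.inr a') T T' then
            |c (T (Sum.inl a)) (T (Sum.inr a')) (T' (Sum.inl a)) (T' (Sum.inr a'))| else 0)
              * (K T * (2 * n ^ 2 / N)) := by
          refine sum_le_sum fun T' _ => (abs_sum_le_sum_abs _ _).trans <|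
            sum_le_sum fun a _ => (abs_sum_le_sum_abs _ _).trans <|
            sum_le_sum fun a' _ => ?_
          rw [abs_mul, abs_of_nonneg (hE0 a a' T T')]
          simp only [hE]
          split_ifs
          · calc _ ≤ K T * 1 *
                (|c (T (Sum.inl a)) (T (Sum.inr a')) (T' (Sum.inl a)) (T' (Sum.inr a'))|
                  * (2 * n ^ 2 / N)) := by
                  gcongr
                  · exact hK1 T'
                  · exact hθabs _ _ _ _ _ _
              _ = _ := by ring
          · simp
      _ = moveDegree h T * (K T * (2 * n ^ 2 / N)) := by
          rw [sum_comm, moveDegree, sum_mul]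
          refine sum_congr rfl fun a _ => ?_
          rw [sum_comm, sum_mul]
          refine sum_congr rfl fun a' _ => ?_
          rw [← sum_mul, sum_agreeOff Sum.inl_ne_inr, hh]
          simp
      _ = (K T * moveDegree h T) * (2 * n ^ 2 / N) := by ring
      _ ≤ 4 * γ * (2 * n ^ 2 / N) := by
          exact mul_le_mul_of_nonneg_right (hKdeg T) (by positivity)
      _ = _ := by ring
  · intro x hx
    set χ : Y → Y → Y → Y → ℝ := fun v v' w w' => x v * x v' * (x w * x w') with hχ
    have hprod : ∀ (a a' : Fin ℓ) (T T' : Fin ℓ ⊕ Fin ℓ → Y),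
        AgreeOff (Sum.inl a) (Sum.inr a') T T' →
        (∏ r, x (T r)) * ∏ r, x (T' r)
          = χ (T (Sum.inl a)) (T (Sum.inr a')) (T' (Sum.inl a)) (T' (Sum.inr a')) := by
      intro a a' T T' hT
      rw [← prod_mul_distrib, Fintype.prod_eq_mul (Sum.inl a) (Sum.inr a') Sum.inl_ne_inr]
      · simp only [hχ]; ring
      · rintro r ⟨h₁, h₂⟩
        rw [hT r h₁ h₂, ← sq, hx]
    have hpair : ∀ a a', ∑ T, ∑ T', (∏ r, x (T r)) * (E a a' T T' *
        θ a a' (T (Sum.inl a)) (T (Sum.inr a')) (T' (Sum.inl a)) (T' (Sum.inr a'))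
          * ∏ r, x (T' r)) = ∑ v, ∑ v', ∑ w, ∑ w', c v v' w w' * χ v v' w w' := by
      intro a a'
      have hpt : ∀ T T', (∏ r, x (T r)) * (E a a' T T' *
          θ a a' (T (Sum.inl a)) (T (Sum.inr a')) (T' (Sum.inl a)) (T' (Sum.inr a'))
            * ∏ r, x (T' r))
          = ∑ v, ∑ v', ∑ w, ∑ w', (θ a a' v v' w w' * χ v v' w w')
            * (E a a' T T' * (J a a' v v' T * J a a' w w' T')) := by
        intro T T'
        have hexp : ∑ v, ∑ v', ∑ w, ∑ w', (θ a a' v v' w w' * χ v v' w w')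
            * (E a a' T T' * (J a a' v v' T * J a a' w w' T'))
            = E a a' T T' * ∑ v, ∑ v', J a a' v v' T *
              ∑ w, ∑ w', J a a' w w' T' * (θ a a' v v' w w' * χ v v' w w') := by
          simp_rw [mul_sum]
          refine sum_congr rfl fun v _ => sum_congr rfl fun v' _ => sum_congr rfl fun w _ =>
            sum_congr rfl fun w' _ => by ring
        rw [hexp]
        simp_rw [hJ, sum_cylinder_mul_eq (Sum.inl a) (Sum.inr a')
          (fun w w' => θ a a' _ _ w w' * χ _ _ w w') T']
        rw [sum_cylinder_mul_eq (Sum.inl a) (Sum.inr a') (fun v v' =>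
          θ a a' v v' (T' (Sum.inl a)) (T' (Sum.inr a'))
            * χ v v' (T' (Sum.inl a)) (T' (Sum.inr a'))) T]
        by_cases hT : AgreeOff (Sum.inl a) (Sum.inr a') T T'
        · rw [← hprod a a' T T' hT]; ring
        · simp [hE, hT]
      simp_rw [hpt]
      have hcomm : ∀ f : (Fin ℓ ⊕ Fin ℓ → Y) → (Fin ℓ ⊕ Fin ℓ → Y) → Y → Y → Y → Y → ℝ,
          ∑ T, ∑ T', ∑ v, ∑ v', ∑ w, ∑ w', f T T' v v' w w'
            = ∑ v, ∑ v', ∑ w, ∑ w', ∑ T, ∑ T', f T T' v v' w w' := by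
        intro f
        have := Finset.sum_comm (s := (univ : Finset ((Fin ℓ ⊕ Fin ℓ → Y) × (Fin ℓ ⊕ Fin ℓ → Y))))
          (t := (univ : Finset (Y × Y × Y × Y)))
          (f := fun p q => f p.1 p.2 q.1 q.2.1 q.2.2.1 q.2.2.2)
        simpa only [← univ_product_univ, sum_product] using this
      rw [hcomm]
      refine sum_congr rfl fun v _ => sum_congr rfl fun v' _ => sum_congr rfl fun w _ =>
        sum_congr rfl fun w' _ => ?_
      simp_rw [← mul_sum]
      change θ a a' v v' w w' * χ v v' w w' * ρ a a' v v' w w' = _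
      have := (hρpos a a' v v' w w').ne'
      simp only [hθ]
      field_simp
    calc _ = ∑ a, ∑ a', ∑ T, ∑ T', (∏ r, x (T r)) * (E a a' T T' *
        θ a a' (T (Sum.inl a)) (T (Sum.inr a')) (T' (Sum.inl a)) (T' (Sum.inr a'))
          * ∏ r, x (T' r)) := by
          simp only [dotProduct, Matrix.mulVec, Matrix.of_apply, mul_sum, sum_mul]
          have := Finset.sum_comm
            (s := (univ : Finset ((Fin ℓ ⊕ Fin ℓ → Y) × (Fin ℓ ⊕ Fin ℓ → Y))))
            (t := (univ : Finset (Fin ℓ × Fin ℓ)))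
            (f := fun p q => (∏ r, x (p.1 r)) * (E q.1 q.2 p.1 p.2 *
              θ q.1 q.2 (p.1 (Sum.inl q.1)) (p.1 (Sum.inr q.2)) (p.2 (Sum.inl q.1))
                (p.2 (Sum.inr q.2)) * ∏ r, x (p.2 r)))
          simpa only [← univ_product_univ, sum_product] using this
      _ = _ := by
          simp_rw [hpair]
          simp [sq, mul_assoc, hχ]

lemma sum_pmo_mul_pmo {k : ℕ} {i j : Fin k} (hij : i ≠ j) :
    ∑ S : Fin k → Bool, pmo (S i) * pmo (S j) = 0 := by
  rw [sum_eq_sum_resample i _ (fun S y => pmo y * pmo (S j)) (fun S y => by simp [hij.symm])]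
  simp [pmo]

lemma sum_pmo_apply {k : ℕ} (i : Fin k) : ∑ S : Fin k → Bool, pmo (S i) = 0 := by
  rw [sum_eq_sum_resample i _ (fun S y => pmo y) (fun S y => by simp)]
  simp [pmo]

/-- The indicator of `true`. -/
def boolInd (b : Bool) : ℝ := if b then 1 else 0

/-- A uniformly random subset separates two distinct points with probability `1/4`. -/
lemma sum_boolInd_mul_boolInd_not {k : ℕ} (i j : Fin k) :
    ∑ S : Fin k → Bool, boolInd (S i) * boolInd (!S j) = if i = j then 0 else 2 ^ k / 4 := by
  split_ifs with hij
  · subst hij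
    refine sum_eq_zero fun S _ => ?_
    cases S i <;> simp [boolInd]
  · have hpt : ∀ S : Fin k → Bool, boolInd (S i) * boolInd (!S j)
        = (1 + pmo (S i) - pmo (S j) - pmo (S i) * pmo (S j)) / 4 := by
      intro S
      cases S i <;> cases S j <;> norm_num [boolInd, pmo]
    simp_rw [hpt]
    rw [← sum_div, sum_sub_distrib, sum_sub_distrib, sum_add_distrib, sum_pmo_mul_pmo hij,
      sum_pmo_apply, sum_pmo_apply]
    simp

/-- Decoupling: a bound for quadratic sign chaoses with one side frozen, uniform over bounded
coefficients, gives a bound for the off-diagonal chaos. -/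
lemma sum_offDiag_chaos_le {k : ℕ} {X : Type*} (F : Fin k → Fin k → X → ℝ) (B : ℝ)
    (hB : ∀ β : Fin k → Fin k → ℝ, (∀ i j, |β i j| ≤ 1) → ∀ x : (Fin k → Bool) → X,
      (∑ ε, ∑ i, pmo (ε i) * ∑ j, β i j * F i j (x ε)) / 2 ^ k ≤ B)
    (x : (Fin k → Bool) → X) :
    (∑ b, ∑ i, ∑ j, if i = j then 0 else pmo (b i) * pmo (b j) * F i j (x b)) / 2 ^ k
      ≤ 4 * B := by
  have h2 : (0 : ℝ) < 2 ^ k := by positivity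
  set Φ : (Fin k → Bool) → (Fin k → Bool) → ℝ := fun S b =>
    ∑ i, ∑ j, boolInd (S i) * boolInd (!S j) * (pmo (b i) * pmo (b j) * F i j (x b)) with hΦ
  have hfix : ∀ S, ∑ b, Φ S b ≤ 2 ^ k * B := by
    intro S
    set τ : (Fin k → Bool) → (Fin k → Bool) → Fin k → Bool :=
      fun ε b i => if S i then (b i == ε i) else b i with hτ
    have hinv : ∀ ε, Function.Involutive (τ ε) := by
      intro ε b
      funext i
      simp only [hτ]
      cases S i <;> cases b i <;> cases ε i <;> simp
    have hswap : ∑ b, Φ S b = (∑ b, ∑ ε, Φ S (τ ε b)) / 2 ^ k := by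
      have hperm : ∀ ε, ∑ b, Φ S (τ ε b) = ∑ b, Φ S b := fun ε =>
        Equiv.sum_comp (hinv ε).toPerm (Φ S)
      have htotal : ∑ b, ∑ ε, Φ S (τ ε b) = 2 ^ k * ∑ b, Φ S b := by
        rw [sum_comm, sum_congr rfl fun ε _ => hperm ε]
        simp
      rw [htotal, mul_div_cancel_left₀ _ h2.ne']
    have hb : ∀ b, (∑ ε, Φ S (τ ε b)) / 2 ^ k ≤ B := by
      intro b
      refine le_trans (le_of_eq ?_) (hB (fun i j => boolInd (S i) * boolInd (!S j)
        * (pmo (b i) * pmo (b j))) ?_ (fun ε => x (τ ε b)))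
      · congr 1
        refine sum_congr rfl fun ε _ => sum_congr rfl fun i _ => ?_
        rw [mul_sum]
        refine sum_congr rfl fun j _ => ?_
        have hi : boolInd (S i) * pmo (τ ε b i) = boolInd (S i) * (pmo (b i) * pmo (ε i)) := by
          simp only [hτ]
          cases S i <;> cases b i <;> cases ε i <;> simp [boolInd, pmo]
        have hj : boolInd (!S j) * pmo (τ ε b j) = boolInd (!S j) * pmo (b j) := by
          simp only [hτ]
          cases S j <;> simp [boolInd]
        calc _ = (boolInd (S i) * pmo (τ ε b i)) * (boolInd (!S j) * pmo (τ ε b j))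
              * F i j (x (τ ε b)) := by ring
          _ = _ := by rw [hi, hj]; ring
      · intro i j
        simp only [abs_mul, abs_pmo, mul_one]
        cases S i <;> cases S j <;> simp [boolInd]
    rw [hswap, sum_div]
    refine (sum_le_sum fun b _ => hb b).trans_eq ?_
    simp
  have hsum : ∑ S, ∑ b, Φ S b
      = 2 ^ k / 4 * ∑ b, ∑ i, ∑ j,
        if i = j then 0 else pmo (b i) * pmo (b j) * F i j (x b) := by
    rw [sum_comm, mul_sum]
    refine sum_congr rfl fun b _ => ?_
    simp only [hΦ]
    rw [sum_comm, mul_sum]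
    refine sum_congr rfl fun i _ => ?_
    rw [sum_comm, mul_sum]
    refine sum_congr rfl fun j _ => ?_
    rw [← sum_mul, sum_boolInd_mul_boolInd_not]
    split_ifs <;> simp
  have hle : ∑ S, ∑ b, Φ S b ≤ 2 ^ k * (2 ^ k * B) := by
    refine (sum_le_sum fun S _ => hfix S).trans_eq ?_
    simp
  rw [hsum] at hle
  rw [div_le_iff₀ h2]
  nlinarith

/-- The contraction of a weight on ordered triples against a sign vector. -/
def link {n : ℕ} (t : Fin n → Fin n → Fin n → ℝ) (u : Fin n) (x : Fin n → Bool) : ℝ :=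
  ∑ v, ∑ w, t u v w * (pmo (x v) * pmo (x w))

/-- Choice of the tuple length. -/
lemma exists_tuple_length {n k d : ℕ} (hk : 0 < k) (hd : 0 < d) :
    ∃ ℓ : ℕ, 0 < ℓ ∧ ℓ ^ 2 * min (2 * k) (d * n) ≤ 2 * d * n ∧ n ≤ 4 * ℓ ^ 2 * k := by
  set q := Nat.sqrt (n / k) with hq
  have hlow : q ^ 2 * k ≤ n :=
    (Nat.mul_le_mul_right k (Nat.sqrt_le' (n / k))).trans (Nat.div_mul_le_self n k)
  have hup : n < (q + 1) ^ 2 * k := by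
    have := Nat.lt_succ_sqrt' (n / k)
    rwa [Nat.div_lt_iff_lt_mul hk] at this
  rcases Nat.eq_zero_or_pos q with h0 | hpos
  · refine ⟨1, one_pos, ?_, ?_⟩
    · have := min_le_right (2 * k) (d * n)
      nlinarith
    · rw [h0] at hup; nlinarith
  · refine ⟨q, hpos, ?_, ?_⟩
    · calc q ^ 2 * min (2 * k) (d * n) ≤ q ^ 2 * (2 * k) :=
            Nat.mul_le_mul_left _ (min_le_left _ _)
        _ ≤ 2 * n := by nlinarith
        _ ≤ 2 * d * n := by nlinarith
    · have : (q + 1) ^ 2 ≤ 4 * q ^ 2 := by nlinarith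
      nlinarith [Nat.mul_le_mul_right k this]

/-- Choice of the moment. -/
lemma exists_moment {n ℓ : ℕ} (hn : 2 ≤ n) (hℓ : 0 < ℓ) :
    ∃ m : ℕ, 2 * (n : ℝ) ^ (2 * ℓ) ≤ Real.exp 1 ^ 2 ^ (m + 1) ∧
      (2 : ℝ) ^ (m + 1) ≤ 8 * (ℓ * Real.log n) := by
  have hn' : (2 : ℝ) ≤ n := by exact_mod_cast hn
  have hℓ' : (1 : ℝ) ≤ ℓ := by exact_mod_cast hℓ
  have hlog : (1 / 2 : ℝ) ≤ Real.log n := by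
    have := Real.log_le_log two_pos hn'
    linarith [Real.log_two_gt_d9]
  have hℓlog : (1 / 2 : ℝ) ≤ ℓ * Real.log n := by nlinarith
  obtain ⟨m, hm₁, hm₂⟩ := exists_nat_pow_near
    (show (1 : ℝ) ≤ 2 * (ℓ * Real.log n) + 1 by linarith) one_lt_two
  refine ⟨m, ?_, ?_⟩
  · have hexp : (n : ℝ) ^ (2 * ℓ) = Real.exp (2 * (ℓ * Real.log n)) := by
      rw [← Real.exp_log (show (0 : ℝ) < n by linarith), ← Real.exp_nat_mul, Real.log_exp]
      push_cast; ring_nf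
    have h2 : (2 : ℝ) ≤ Real.exp 1 := by linarith [Real.exp_one_gt_d9]
    calc 2 * (n : ℝ) ^ (2 * ℓ) ≤ Real.exp 1 * Real.exp (2 * (ℓ * Real.log n)) := by
          rw [hexp]; gcongr
      _ = Real.exp (2 * (ℓ * Real.log n) + 1) := by rw [← Real.exp_add, add_comm]
      _ ≤ Real.exp ((2 ^ (m + 1) : ℕ) * 1) := by
          rw [mul_one]; push_cast; exact Real.exp_le_exp.2 hm₂.le
      _ = _ := Real.exp_nat_mul _ _
  · rw [pow_succ]; linarith

/-- The weight of the moves of one color from a pair of vertices, in terms of the triples. -/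
lemma sum_abs_pair_weight_le {n k : ℕ} (t : Fin k → Fin n → Fin n → Fin n → ℝ)
    (ht : ∀ i u v w, 0 ≤ t i u v w) (β : Fin k → ℝ) (hβ : ∀ j, |β j| ≤ 1)
    (i : Fin k) (v v' : Fin n) :
    ∑ w, ∑ w', |∑ j, β j * ∑ u, t i u v w * t j u v' w'|
      ≤ ∑ u, (∑ w, t i u v w) * ∑ j, ∑ w, t j u v' w := by
  calc ∑ w, ∑ w', |∑ j, β j * ∑ u, t i u v w * t j u v' w'|
      ≤ ∑ w, ∑ w', ∑ j, ∑ u, t i u v w * t j u v' w' := by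
        refine sum_le_sum fun w _ => sum_le_sum fun w' _ =>
          (abs_sum_le_sum_abs _ _).trans <| sum_le_sum fun j _ => ?_
        have h0 : 0 ≤ ∑ u, t i u v w * t j u v' w' :=
          sum_nonneg fun u _ => mul_nonneg (ht _ _ _ _) (ht _ _ _ _)
        rw [abs_mul, abs_of_nonneg h0]
        exact mul_le_of_le_one_left h0 (hβ j)
    _ = ∑ u, (∑ w, t i u v w) * ∑ j, ∑ w, t j u v' w := by
        simp_rw [sum_mul_sum, mul_sum]
        have := Finset.sum_comm (s := (univ : Finset (Fin n × Fin n × Fin k)))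
          (t := (univ : Finset (Fin n)))
          (f := fun p u => t i u v p.1 * t p.2.2 u v' p.2.1)
        simp only [← univ_product_univ, sum_product] at this
        rw [this]
        exact sum_congr rfl fun u _ => sum_congr rfl fun w _ => sum_comm

section Triples

variable {n k d : ℕ} (t : Fin k → Fin n → Fin n → Fin n → ℝ)

/-- The average degree condition for the moves of one color. -/
lemma average_move_weight_le (hn : 0 < n) (hd : 0 < d)
    (ht : ∀ i u v w, 0 ≤ t i u v w) (ht₁ : ∀ i u v w, t i u v w = t i v u w)
    (hmatch : ∀ i u, ∑ v, ∑ w, t i u v w ≤ 2) (hpair : ∀ u v, ∑ i, ∑ w, t i u v w ≤ d)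
    {ℓ : ℕ} (hℓ : 0 < ℓ) (hℓD : ℓ ^ 2 * min (2 * k) (d * n) ≤ 2 * d * n)
    (i : Fin k) (h : Fin n → Fin n → ℝ)
    (hh : ∀ v v', h v v' ≤ ∑ u, (∑ w, t i u v w) * ∑ j, ∑ w, t j u v' w) (v v' : Fin n) :
    h v v' + ℓ * ((∑ y', h v y') / n) + ℓ * ((∑ y, h y v') / n)
      + ℓ ^ 2 * ((∑ y, ∑ y', h y y') / n / n) ≤ 14 * d := by
  have hn' : (0 : ℝ) < n := by exact_mod_cast hn
  have hℓ' : (1 : ℝ) ≤ ℓ := by exact_mod_cast hℓ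
  set D : ℝ := ((min (2 * k) (d * n) : ℕ) : ℝ) with hD
  have hD0 : 0 ≤ D := Nat.cast_nonneg _
  have hℓD' : (ℓ : ℝ) ^ 2 * D ≤ 2 * d * n := by rw [hD]; exact_mod_cast hℓD
  set a : Fin n → Fin n → ℝ := fun u v => ∑ w, t i u v w with ha
  set e : Fin n → Fin n → ℝ := fun u v => ∑ j, ∑ w, t j u v w with he
  have ha0 : ∀ u v, 0 ≤ a u v := fun u v => sum_nonneg fun w _ => ht _ _ _ _
  have he0 : ∀ u v, 0 ≤ e u v := fun u v => sum_nonneg fun j _ => sum_nonneg fun w _ => ht _ _ _ _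
  have hasymm : ∀ u v, a u v = a v u := fun u v => sum_congr rfl fun w _ => ht₁ _ _ _ _
  have hesymm : ∀ u v, e u v = e v u := fun u v =>
    sum_congr rfl fun j _ => sum_congr rfl fun w _ => ht₁ _ _ _ _
  have hasum : ∀ u, ∑ v, a u v ≤ 2 := fun u => hmatch i u
  have hasum' : ∀ v, ∑ u, a u v ≤ 2 := fun v => by
    simp_rw [fun u => hasymm u v]; exact hasum v
  have hesum : ∀ u, ∑ v, e u v ≤ D := by
    intro u
    rw [hD, Nat.cast_min]
    refine le_min ?_ ?_
    · simp only [he]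
      rw [sum_comm]
      refine (sum_le_sum fun j _ => hmatch j u).trans_eq ?_
      simp [mul_comm]
    · refine (sum_le_sum fun v _ => hpair u v).trans_eq ?_
      simp [mul_comm]
  have hesum' : ∀ v, ∑ u, e u v ≤ D := fun v => by
    simp_rw [fun u => hesymm u v]; exact hesum v
  have h1 : h v v' ≤ 2 * d := by
    calc h v v' ≤ ∑ u, a u v * e u v' := hh v v'
      _ ≤ ∑ u, a u v * d := sum_le_sum fun u _ => mul_le_mul_of_nonneg_left (hpair u v') (ha0 _ _)
      _ ≤ 2 * d := by rw [← sum_mul]; gcongr; exact hasum' v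
  have h2 : ∀ v, ∑ y', h v y' ≤ 2 * D := by
    intro v
    calc ∑ y', h v y' ≤ ∑ y', ∑ u, a u v * e u y' := sum_le_sum fun y' _ => hh v y'
      _ = ∑ u, a u v * ∑ y', e u y' := by rw [sum_comm]; simp_rw [mul_sum]
      _ ≤ ∑ u, a u v * D := sum_le_sum fun u _ => mul_le_mul_of_nonneg_left (hesum u) (ha0 _ _)
      _ ≤ 2 * D := by rw [← sum_mul]; gcongr; exact hasum' v
  have h3 : ∑ y, h y v' ≤ 2 * D := by
    calc ∑ y, h y v' ≤ ∑ y, ∑ u, a u y * e u v' := sum_le_sum fun y _ => hh y v'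
      _ = ∑ u, (∑ y, a u y) * e u v' := by rw [sum_comm]; simp_rw [sum_mul]
      _ ≤ ∑ u, 2 * e u v' := sum_le_sum fun u _ => mul_le_mul_of_nonneg_right (hasum u) (he0 _ _)
      _ ≤ 2 * D := by rw [← mul_sum]; gcongr; exact hesum' v'
  have h4 : ∑ y, ∑ y', h y y' ≤ n * (2 * D) := by
    refine (sum_le_sum fun y _ => h2 y).trans_eq ?_
    simp
  have hlin : ∀ s : ℝ, s ≤ 2 * D → ℓ * (s / n) ≤ 4 * d := by
    intro s hs
    rw [mul_div_assoc', div_le_iff₀ hn']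
    have : (ℓ : ℝ) * s ≤ ℓ ^ 2 * (2 * D) :=
      (mul_le_mul_of_nonneg_left hs (by linarith)).trans
        (mul_le_mul_of_nonneg_right (by nlinarith) (by linarith))
    linarith
  have hquad : (ℓ : ℝ) ^ 2 * ((∑ y, ∑ y', h y y') / n / n) ≤ 4 * d := by
    rw [div_div, mul_div_assoc', div_le_iff₀ (by positivity)]
    have : (ℓ : ℝ) ^ 2 * ∑ y, ∑ y', h y y' ≤ ℓ ^ 2 * (n * (2 * D)) := by gcongr
    nlinarith
  linarith [hlin _ (h2 v), hlin _ h3]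

/-- The decoupled degree-four chaos, at a point chosen depending on the signs, is small on
average. -/
lemma sum_decoupled_chaos_le (hn : 2 ≤ n) (hk : 0 < k) (hd : 0 < d)
    (ht : ∀ i u v w, 0 ≤ t i u v w) (ht₁ : ∀ i u v w, t i u v w = t i v u w)
    (ht₂ : ∀ i u v w, t i u v w = t i u w v)
    (hmatch : ∀ i u, ∑ v, ∑ w, t i u v w ≤ 2) (hpair : ∀ u v, ∑ i, ∑ w, t i u v w ≤ d)
    (β : Fin k → Fin k → ℝ) (hβ : ∀ i j, |β i j| ≤ 1) (x : (Fin k → Bool) → Fin n → Bool) :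
    (∑ ε, ∑ i, pmo (ε i) * ∑ j, β i j * ∑ u, link (t i) u (x ε) * link (t j) u (x ε)) / 2 ^ k
      ≤ 5040 * d * (n * k) * Real.sqrt (Real.sqrt (n * k) * Real.log n) := by
  have hn' : (2 : ℝ) ≤ n := by exact_mod_cast hn
  have hk' : (0 : ℝ) < k := by exact_mod_cast hk
  have : NeZero n := ⟨by omega⟩
  obtain ⟨ℓ, hℓ, hℓD, hℓn⟩ := exists_tuple_length (n := n) hk hd
  obtain ⟨m, hm₁, hm₂⟩ := exists_moment hn hℓ
  have hℓ' : (0 : ℝ) < ℓ := by exact_mod_cast hℓ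
  have hlog : 0 < Real.log n := Real.log_pos (by linarith)
  set c : Fin k → Fin n → Fin n → Fin n → Fin n → ℝ := fun i v v' w w' =>
    ∑ j, β i j * ∑ u, t i u v w * t j u v' w' with hc
  have hcsymm : ∀ i v v' w w', c i v v' w w' = c i w w' v v' := by
    intro i v v' w w'
    refine sum_congr rfl fun j _ => ?_
    congr 1
    exact sum_congr rfl fun u _ => by rw [ht₂ i u v w, ht₂ j u v' w']
  have hcard : (Fintype.card (Fin ℓ ⊕ Fin ℓ → Fin n) : ℝ) = n ^ (2 * ℓ) := by
    simp [two_mul]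
  have hA : ∀ i, _ := fun i => exists_kikuchi_matrix ℓ (c i) (hcsymm i)
    (fun v v' => ∑ w, ∑ w', |c i v v' w w'|) (fun _ _ => rfl) (14 * d) (by positivity)
    (by
      rw [Fintype.card_fin]
      exact average_move_weight_le t (by omega) hd ht ht₁ hmatch hpair hℓ hℓD i _
        (sum_abs_pair_weight_le t ht (β i) (hβ i) i))
  choose A hAsymm hArow hAform using hA
  have hmain := sum_dotProduct_mulVec_le hk A hAsymm _ (by positivity) hArow
    (fun ε T => ∏ r, pmo (x ε (T r)))
    (fun ε T => by rw [← prod_pow]; exact prod_eq_one fun r _ => pmo_sq _) m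
    (by rw [hcard]; exact hm₁)
  have hform : ∀ ε : Fin k → Bool, (fun T : Fin ℓ ⊕ Fin ℓ → Fin n => ∏ r, pmo (x ε (T r))) ⬝ᵥ
      (∑ i, pmo (ε i) • A i).mulVec (fun T => ∏ r, pmo (x ε (T r)))
      = ℓ ^ 2 * ∑ i, pmo (ε i) *
        ∑ j, β i j * ∑ u, link (t i) u (x ε) * link (t j) u (x ε) := by
    intro ε
    rw [Matrix.sum_mulVec, dotProduct_sum, mul_sum]
    refine sum_congr rfl fun i _ => ?_
    rw [Matrix.smul_mulVec, dotProduct_smul, hAform i (fun y => pmo (x ε y)) (fun y => pmo_sq _),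
      smul_eq_mul, mul_left_comm]
    congr 2
    simp_rw [mul_comm (link (t i) _ _)]
    simp only [hc, link, mul_sum, sum_mul]
    have := Finset.sum_comm (s := (univ : Finset (Fin n × Fin n × Fin n × Fin n)))
      (t := (univ : Finset (Fin k × Fin n)))
      (f := fun p q => β i q.1 * (t i q.2 p.1 p.2.2.1 * t q.1 q.2 p.2.1 p.2.2.2) *
        (pmo (x ε p.1) * pmo (x ε p.2.1) * (pmo (x ε p.2.2.1) * pmo (x ε p.2.2.2))))
    simp only [← univ_product_univ, sum_product] at this
    rw [this]
    refine sum_congr rfl fun j _ => sum_congr rfl fun u _ => sum_congr rfl fun v _ => ?_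
    rw [sum_comm]
    refine sum_congr rfl fun w _ => sum_congr rfl fun v' _ => sum_congr rfl fun w' _ => ?_
    ring
  simp_rw [hform] at hmain
  rw [← mul_sum, mul_div_assoc] at hmain
  set Q := (∑ ε, ∑ i, pmo (ε i) *
    ∑ j, β i j * ∑ u, link (t i) u (x ε) * link (t j) u (x ε)) / 2 ^ k with hQ
  have he3 : Real.exp 1 ≤ 3 := by linarith [Real.exp_one_lt_d9]
  have hsqrt : Real.exp 1 * Real.sqrt (2 ^ (m + 1) * k * Real.exp 1)
      ≤ 15 * Real.sqrt (ℓ * Real.log n * k) := by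
    calc Real.exp 1 * Real.sqrt (2 ^ (m + 1) * k * Real.exp 1)
        ≤ 3 * Real.sqrt (5 ^ 2 * (ℓ * Real.log n * k)) := by
          refine mul_le_mul he3 (Real.sqrt_le_sqrt ?_) (Real.sqrt_nonneg _) (by norm_num)
          have : (2 : ℝ) ^ (m + 1) * k * Real.exp 1 ≤ 8 * (ℓ * Real.log n) * k * 3 := by gcongr
          have h0 : 0 < ℓ * Real.log n * k := by positivity
          linarith
      _ = 15 * Real.sqrt (ℓ * Real.log n * k) := by
          rw [Real.sqrt_mul (by positivity), Real.sqrt_sq (by norm_num)]; ring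
  have hscale : (n : ℝ) ^ 2 * Real.sqrt (ℓ * Real.log n * k)
      ≤ 3 * ℓ ^ 2 * (n * k) * Real.sqrt (Real.sqrt (n * k) * Real.log n) := by
    refine le_of_pow_le_pow_left₀ two_ne_zero (by positivity) ?_
    rw [mul_pow, mul_pow, Real.sq_sqrt (by positivity), Real.sq_sqrt (by positivity)]
    have hs0 : 0 ≤ Real.sqrt (n * k : ℝ) := Real.sqrt_nonneg _
    have hs : Real.sqrt (n * k : ℝ) ^ 2 = n * k := Real.sq_sqrt (by positivity)
    have hℓn' : (n : ℝ) ≤ 4 * ℓ ^ 2 * k := by exact_mod_cast hℓn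
    have hkey : (n : ℝ) ^ 2 ≤ 9 * ℓ ^ 3 * k * Real.sqrt (n * k) := by
      refine le_of_pow_le_pow_left₀ two_ne_zero (by positivity) ?_
      rw [mul_pow _ (Real.sqrt _), hs]
      have h3 : (n : ℝ) ^ 3 ≤ (4 * ℓ ^ 2 * k) ^ 3 := by gcongr
      have h4 : (n : ℝ) ^ 3 * n ≤ (4 * ℓ ^ 2 * k) ^ 3 * n := by gcongr
      have h5 : (0 : ℝ) ≤ ℓ ^ 6 * k ^ 3 * n := by positivity
      nlinarith
    calc ((n : ℝ) ^ 2) ^ 2 * (ℓ * Real.log n * k)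
        = n ^ 2 * (n ^ 2 * (ℓ * Real.log n * k)) := by ring
      _ ≤ n ^ 2 * (9 * ℓ ^ 3 * k * Real.sqrt (n * k) * (ℓ * Real.log n * k)) := by gcongr
      _ = _ := by ring
  have hN : (0 : ℝ) < (Fintype.card (Fin ℓ ⊕ Fin ℓ → Fin n) : ℝ) := by rw [hcard]; positivity
  have hfinal : (ℓ : ℝ) ^ 2 * Q ≤ ℓ ^ 2 *
      (5040 * d * (n * k) * Real.sqrt (Real.sqrt (n * k) * Real.log n)) := by
    calc (ℓ : ℝ) ^ 2 * Q ≤ _ := hmain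
      _ = 112 * d * n ^ 2 * (Real.exp 1 * Real.sqrt (2 ^ (m + 1) * k * Real.exp 1)) := by
          rw [Fintype.card_fin]; field_simp; ring
      _ ≤ 112 * d * n ^ 2 * (15 * Real.sqrt (ℓ * Real.log n * k)) := by gcongr
      _ = 1680 * d * (n ^ 2 * Real.sqrt (ℓ * Real.log n * k)) := by ring
      _ ≤ 1680 * d *
          (3 * ℓ ^ 2 * (n * k) * Real.sqrt (Real.sqrt (n * k) * Real.log n)) := by gcongr
      _ = _ := by ring
  exact le_of_mul_le_mul_left hfinal (by positivity)

end Triples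

/-- The number of hyperedges whose elements are the distinct vertices `u`, `v`, `w`. -/
def tripleWeight {n : ℕ} (H : Finset (Finset (Fin n))) (u v w : Fin n) : ℝ :=
  ∑ C ∈ H, if u ∈ C ∧ v ∈ C.erase u ∧ w ∈ (C.erase u).erase v then 1 else 0

section TripleWeight

variable {n : ℕ} {H : Finset (Finset (Fin n))}

lemma tripleWeight_nonneg (u v w : Fin n) : 0 ≤ tripleWeight H u v w :=
  sum_nonneg fun C _ => by split_ifs <;> norm_num

lemma tripleWeight_swap_left (u v w : Fin n) : tripleWeight H u v w = tripleWeight H v u w := by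
  refine sum_congr rfl fun C _ => if_congr ?_ rfl rfl
  simp only [mem_erase]
  tauto

lemma tripleWeight_swap_right (u v w : Fin n) : tripleWeight H u v w = tripleWeight H u w v := by
  refine sum_congr rfl fun C _ => if_congr ?_ rfl rfl
  simp only [mem_erase]
  tauto

lemma sum_tripleWeight_mul (u v : Fin n) (f : Fin n → ℝ) :
    ∑ w, tripleWeight H u v w * f w
      = ∑ C ∈ H, if u ∈ C ∧ v ∈ C.erase u then ∑ w ∈ (C.erase u).erase v, f w else 0 := by
  simp only [tripleWeight, sum_mul]
  rw [sum_comm]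
  refine sum_congr rfl fun C _ => ?_
  by_cases h : u ∈ C ∧ v ∈ C.erase u
  · rw [if_pos h]
    simp [h.1, h.2, -mem_erase, sum_ite_mem]
  · simp [h, ← and_assoc, -mem_erase]

lemma sum_sum_tripleWeight_mul (u : Fin n) (f : Fin n → Fin n → ℝ) :
    ∑ v, ∑ w, tripleWeight H u v w * f v w
      = ∑ C ∈ H, if u ∈ C then ∑ v ∈ C.erase u, ∑ w ∈ (C.erase u).erase v, f v w else 0 := by
  simp_rw [sum_tripleWeight_mul]
  rw [sum_comm]
  refine sum_congr rfl fun C _ => ?_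
  by_cases h : u ∈ C
  · simp [h, -mem_erase, sum_ite_mem]
  · simp [h]

lemma sum_sum_tripleWeight_le (hH : IsMatching 3 H) (u : Fin n) :
    ∑ v, ∑ w, tripleWeight H u v w ≤ 2 := by
  have h := sum_sum_tripleWeight_mul (H := H) u fun _ _ => 1
  simp only [mul_one] at h
  have hC : ∀ C ∈ H, (if u ∈ C then ∑ v ∈ C.erase u, ∑ w ∈ (C.erase u).erase v, (1 : ℝ) else 0)
      = if u ∈ C then 2 else 0 := by
    intro C hC
    refine if_ctx_congr Iff.rfl (fun hu => ?_) fun _ => rfl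
    have h2 : (C.erase u).card = 2 := by rw [card_erase_of_mem hu, hH.1 C hC]
    have h1 : ∀ v ∈ C.erase u, ∑ w ∈ (C.erase u).erase v, (1 : ℝ) = 1 := fun v hv => by
      simp [card_erase_of_mem hv, h2]
    rw [sum_congr rfl h1]
    simp [h2]
  rw [h, sum_congr rfl hC, ← sum_filter, sum_const, nsmul_eq_mul]
  have hcard : (H.filter fun C => u ∈ C).card ≤ 1 := by
    refine card_le_one.2 fun C hC D hD => ?_
    rw [mem_filter] at hC hD
    by_contra hne
    exact disjoint_left.1 (hH.2 hC.1 hD.1 hne) hC.2 hD.2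
  have : ((H.filter fun C => u ∈ C).card : ℝ) ≤ 1 := by exact_mod_cast hcard
  linarith

lemma sum_tripleWeight_eq (hH : IsMatching 3 H) (u v : Fin n) :
    ∑ w, tripleWeight H u v w
      = if u = v then 0 else ((H.filter fun C => {u, v} ⊆ C).card : ℝ) := by
  have h := sum_tripleWeight_mul (H := H) u v fun _ => 1
  simp only [mul_one] at h
  rw [h]
  split_ifs with huv
  · subst huv; simp
  · rw [card_filter]
    push_cast
    refine sum_congr rfl fun C hC => ?_
    refine if_ctx_congr ?_ (fun hmem => ?_) fun _ => rfl
    · simp [insert_subset_iff, Ne.symm huv]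
    · rw [insert_subset_iff, singleton_subset_iff] at hmem
      have hv : v ∈ C.erase u := mem_erase.2 ⟨Ne.symm huv, hmem.2⟩
      simp [card_erase_of_mem hv, card_erase_of_mem hmem.1, hH.1 C hC]

/-- A product over a finite set, expanded along its elements. -/
lemma sum_mul_prod_erase {ι : Type*} [DecidableEq ι] (D : Finset ι) (f : ι → ℝ) :
    ∑ u ∈ D, f u * ∏ v ∈ D.erase u, f v = D.card * ∏ v ∈ D, f v := by
  rw [sum_congr rfl fun u hu => mul_prod_erase D f hu, sum_const, nsmul_eq_mul]

lemma sum_pmo_mul_link (hH : IsMatching 3 H) (x : Fin n → Bool) :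
    ∑ u, pmo (x u) * link (tripleWeight H) u x = 6 * ∑ C ∈ H, ∏ v ∈ C, pmo (x v) := by
  simp only [link, sum_sum_tripleWeight_mul, mul_sum]
  rw [sum_comm]
  refine sum_congr rfl fun C hC => ?_
  have hpair : ∀ u ∈ C, ∑ v ∈ C.erase u, ∑ w ∈ (C.erase u).erase v, pmo (x v) * pmo (x w)
      = 2 * ∏ v ∈ C.erase u, pmo (x v) := by
    intro u hu
    have h2 : (C.erase u).card = 2 := by rw [card_erase_of_mem hu, hH.1 C hC]
    have h := sum_mul_prod_erase (C.erase u) fun v => pmo (x v)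
    rw [h2] at h
    push_cast at h
    rw [← h]
    refine sum_congr rfl fun v hv => ?_
    have h1 : ((C.erase u).erase v).card = 1 := by rw [card_erase_of_mem hv, h2]
    obtain ⟨w, hw⟩ := card_eq_one.1 h1
    simp [hw]
  have h := sum_mul_prod_erase C fun v => pmo (x v)
  rw [hH.1 C hC] at h
  push_cast at h
  calc _ = ∑ u ∈ C, pmo (x u) * (2 * ∏ v ∈ C.erase u, pmo (x v)) := by
        simp only [mul_ite, mul_zero]
        rw [sum_ite_mem, univ_inter]
        exact sum_congr rfl fun u hu => by rw [hpair u hu]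
    _ = 2 * ∑ u ∈ C, pmo (x u) * ∏ v ∈ C.erase u, pmo (x v) := by
        rw [mul_sum]
        exact sum_congr rfl fun u _ => by ring
    _ = _ := by rw [h]; ring

lemma abs_link_le (hH : IsMatching 3 H) (u : Fin n) (x : Fin n → Bool) :
    |link (tripleWeight H) u x| ≤ 2 := by
  refine le_trans ?_ (sum_sum_tripleWeight_le hH u)
  refine (abs_sum_le_sum_abs _ _).trans <| sum_le_sum fun v _ =>
    (abs_sum_le_sum_abs _ _).trans <| sum_le_sum fun w _ => ?_
  rw [abs_mul, abs_mul, abs_pmo, abs_pmo, abs_of_nonneg (tripleWeight_nonneg u v w)]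
  simp

end TripleWeight

/-- Cauchy–Schwarz over the first vertex of each hyperedge, splitting off the diagonal. -/
lemma sq_sum_pmo_mul_le {n k : ℕ} {H : Fin k → Finset (Finset (Fin n))}
    (hH : ∀ i, IsMatching 3 (H i)) (b : Fin k → Bool) (x : Fin n → Bool) :
    (6 * ∑ i, pmo (b i) * ∑ C ∈ H i, ∏ v ∈ C, pmo (x v)) ^ 2
      ≤ n * (4 * n * k + ∑ i, ∑ j, if i = j then 0 else pmo (b i) * pmo (b j) *
        ∑ u, link (tripleWeight (H i)) u x * link (tripleWeight (H j)) u x) := by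
  set L : Fin k → Fin n → ℝ := fun i u => link (tripleWeight (H i)) u x with hL
  have hf : 6 * ∑ i, pmo (b i) * ∑ C ∈ H i, ∏ v ∈ C, pmo (x v)
      = ∑ u, pmo (x u) * ∑ i, pmo (b i) * L i u := by
    simp_rw [mul_sum univ]
    rw [sum_comm]
    refine sum_congr rfl fun i _ => ?_
    rw [mul_left_comm, ← sum_pmo_mul_link (hH i), mul_sum]
    exact sum_congr rfl fun u _ => mul_left_comm _ _ _
  have hsq : ∑ u, (∑ i, pmo (b i) * L i u) ^ 2
      = ∑ i, ∑ j, pmo (b i) * pmo (b j) * ∑ u, L i u * L j u := by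
    simp_rw [sq, sum_mul_sum, mul_sum]
    rw [sum_comm]
    refine sum_congr rfl fun i _ => ?_
    rw [sum_comm]
    exact sum_congr rfl fun j _ => sum_congr rfl fun u _ => by ring
  have hdiag : ∀ i, ∑ u, L i u * L i u ≤ 4 * n := by
    intro i
    calc ∑ u, L i u * L i u ≤ ∑ _u : Fin n, (4 : ℝ) := by
          refine sum_le_sum fun u _ => ?_
          have := abs_le.1 (abs_link_le (hH i) u x)
          nlinarith [this.1, this.2]
      _ = 4 * n := by simp [mul_comm]
  have hsplit : ∑ i, ∑ j, pmo (b i) * pmo (b j) * ∑ u, L i u * L j u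
      ≤ 4 * n * k + ∑ i, ∑ j, if i = j then 0 else pmo (b i) * pmo (b j) *
        ∑ u, L i u * L j u := by
    calc _ = ∑ i, ∑ j, ((if i = j then ∑ u, L i u * L j u else 0)
            + if i = j then 0 else pmo (b i) * pmo (b j) * ∑ u, L i u * L j u) := by
          refine sum_congr rfl fun i _ => sum_congr rfl fun j _ => ?_
          split_ifs with hij
          · subst hij; rw [← sq, pmo_sq, one_mul, add_zero]
          · rw [zero_add]
      _ = ∑ i, ∑ u, L i u * L i u + ∑ i, ∑ j, if i = j then 0 else
            pmo (b i) * pmo (b j) * ∑ u, L i u * L j u := by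
          simp only [sum_add_distrib, sum_ite_eq, mem_univ, if_true]
      _ ≤ _ := by
          gcongr
          refine (sum_le_sum fun i _ => hdiag i).trans_eq ?_
          simp [mul_comm]
  calc _ = (∑ u, pmo (x u) * ∑ i, pmo (b i) * L i u) ^ 2 := by rw [hf]
    _ ≤ (∑ u, pmo (x u) ^ 2) * ∑ u, (∑ i, pmo (b i) * L i u) ^ 2 :=
        sum_mul_sq_le_sq_mul_sq _ _ _
    _ = n * ∑ i, ∑ j, pmo (b i) * pmo (b j) * ∑ u, L i u * L j u := by
        rw [hsq]; simp [pmo_sq]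
    _ ≤ _ := by gcongr

lemma sq_rpow_mul_rpow_eq_sqrt {a l : ℝ} (ha : 0 ≤ a) (hl : 0 ≤ l) :
    (a ^ ((1 : ℝ) / 8) * l ^ ((1 : ℝ) / 4)) ^ 2 = Real.sqrt (Real.sqrt a * l) := by
  symm
  rw [Real.sqrt_eq_iff_eq_sq (by positivity) (by positivity), ← pow_mul, mul_pow,
    ← Real.rpow_natCast (a ^ _), ← Real.rpow_natCast (l ^ _), ← Real.rpow_mul ha,
    ← Real.rpow_mul hl, Real.sqrt_eq_rpow]
  norm_num

/-- **3-XOR refutation.** There is an absolute constant `c > 0` such that: if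
`H 1, …, H k` are `3`-uniform hypergraph matchings on `[n]` in which every pair
`{u,v}` is contained in at most `d` hyperedges (over all `i`), then with
`f_b(x) = Σᵢ b_i Σ_{C ∈ H i} ∏_{v ∈ C} x_v` and `val(f_b) = max_{x ∈ {-1,1}ⁿ} f_b(x)`,
the expectation of `val(f_b)` over uniform `b ∈ {-1,1}^k` is at most
`c · n · √k · d · (nk)^{1/8} · (log n)^{1/4}`. -/
theorem three_xor_refutation :
    ∃ c : ℝ, 0 < c ∧
      ∀ (n k d : ℕ), 2 ≤ n → 0 < k → 0 < d →
      ∀ H : Fin k → Finset (Finset (Fin n)),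
        (∀ i, IsMatching 3 (H i)) →
        (∀ u v : Fin n, u ≠ v →
          ∑ i, ((H i).filter (fun C => {u, v} ⊆ C)).card ≤ d) →
        (∑ b : Fin k → Bool,
            ⨆ x : Fin n → Bool,
              ∑ i, pmo (b i) * ∑ C ∈ H i, ∏ v ∈ C, pmo (x v)) / 2 ^ k
          ≤ c * n * Real.sqrt k * d * ((n : ℝ) * k) ^ ((1 : ℝ) / 8) *
              Real.log n ^ ((1 : ℝ) / 4) := by
  refine ⟨100, by norm_num, fun n k d hn hk hd H hH hpair => ?_⟩
  have hn' : (2 : ℝ) ≤ n := by exact_mod_cast hn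
  have hk' : (1 : ℝ) ≤ k := by exact_mod_cast hk
  have hd' : (1 : ℝ) ≤ d := by exact_mod_cast hd
  have h2k : (0 : ℝ) < 2 ^ k := by positivity
  have hlog : (69 / 100 : ℝ) ≤ Real.log n := by
    have := Real.log_le_log two_pos hn'
    linarith [Real.log_two_gt_d9]
  set val : (Fin k → Bool) → (Fin n → Bool) → ℝ := fun b x =>
    ∑ i, pmo (b i) * ∑ C ∈ H i, ∏ v ∈ C, pmo (x v) with hval
  choose x hx using fun b => exists_eq_ciSup_of_finite (f := val b)
  change (∑ b, ⨆ y, val b y) / 2 ^ k ≤ _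
  simp_rw [← hx]
  set t : Fin k → Fin n → Fin n → Fin n → ℝ := fun i => tripleWeight (H i) with ht
  set W := Real.sqrt (Real.sqrt (n * k) * Real.log n) with hW
  have hpair' : ∀ u v, ∑ i, ∑ w, t i u v w ≤ d := by
    intro u v
    simp only [ht, fun i => sum_tripleWeight_eq (hH i) u v]
    split_ifs with huv
    · simp
    · exact_mod_cast hpair u v huv
  have hchaos := sum_offDiag_chaos_le
    (fun i j y => ∑ u, link (t i) u y * link (t j) u y) _
    (sum_decoupled_chaos_le t hn hk hd (fun i => tripleWeight_nonneg)
      (fun i => tripleWeight_swap_left) (fun i => tripleWeight_swap_right)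
      (fun i => sum_sum_tripleWeight_le (hH i)) hpair') x
  have hW1 : (4 / 5 : ℝ) ≤ W := by
    refine Real.le_sqrt_of_sq_le ?_
    have : (1 : ℝ) ≤ Real.sqrt (n * k) := Real.one_le_sqrt.2 (by nlinarith)
    nlinarith
  have hsq : ((∑ b, val b (x b)) / 2 ^ k) ^ 2 ≤ 100 ^ 2 * (n ^ 2 * k * d * W) := by
    have hjensen : ((∑ b, val b (x b)) / 2 ^ k) ^ 2 ≤ (∑ b, val b (x b) ^ 2) / 2 ^ k := by
      have := Real.pow_arith_mean_le_arith_mean_pow_of_even univ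
        (fun _ : Fin k → Bool => ((2 : ℝ) ^ k)⁻¹) (fun b => val b (x b))
        (fun _ _ => by positivity) (by simp) even_two
      rw [← mul_sum, ← mul_sum] at this
      rwa [div_eq_inv_mul, div_eq_inv_mul]
    have hmean : 36 * ((∑ b, val b (x b) ^ 2) / 2 ^ k)
        ≤ n * (4 * n * k + 4 * (5040 * d * (n * k) * W)) := by
      refine le_trans ?_ (mul_le_mul_of_nonneg_left (add_le_add_right hchaos _) (by positivity))
      rw [mul_div_assoc', mul_sum]
      calc (∑ b, 36 * val b (x b) ^ 2) / 2 ^ k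
          ≤ (∑ b, n * (4 * n * k + ∑ i, ∑ j, if i = j then 0 else pmo (b i) * pmo (b j) *
              ∑ u, link (t i) u (x b) * link (t j) u (x b))) / 2 ^ k := by
            refine div_le_div_of_nonneg_right (sum_le_sum fun b _ => ?_) h2k.le
            have := sq_sum_pmo_mul_le hH b (x b)
            rw [mul_pow] at this
            norm_num at this
            exact this
        _ = _ := by
            rw [← mul_sum, sum_add_distrib]
            simp
            field_simp
    have hdW : 4 / 5 ≤ d * W := by nlinarith
    have h0 : (0 : ℝ) ≤ n ^ 2 * k := by positivity
    nlinarith [mul_le_mul_of_nonneg_left hdW h0]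
  have hroot := sq_rpow_mul_rpow_eq_sqrt (a := n * k) (by positivity) (l := Real.log n) (by linarith)
  refine le_of_pow_le_pow_left₀ two_ne_zero (by positivity) (hsq.trans ?_)
  calc 100 ^ 2 * (n ^ 2 * k * d * W) ≤ 100 ^ 2 * (n ^ 2 * k * d ^ 2 * W) := by
        gcongr
        nlinarith
    _ = (100 * n * d) ^ 2 * Real.sqrt k ^ 2 *
        (((n : ℝ) * k) ^ ((1 : ℝ) / 8) * Real.log n ^ ((1 : ℝ) / 4)) ^ 2 := by
        rw [hroot, Real.sq_sqrt (by positivity)]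
        ring
    _ = _ := by ring
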